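/- arXiv:2304.04373 — 2 statements merged into one kernel-verified Lean document; each statement's English description precedes it below -/
import Mathlib

section
/- Let -∞ < a < b < ∞, let μ be a weight on [a,b], and let Φ be a Young function that is submultiplicative and invertible on [0,∞). Then for every t ∈ (a,b), ‖ x ↦ Φ^{-1}( μ[x,b]^{-1/2} ) ‖_{L_μ^Φ[t,b]} ≤ [ Φ^{-1}(1/2) · Φ^{-1}( μ[t,b]^{-1/2} ) ]^{-1}. -/
/-!
Let `ν` be the measure `μ(x) dx` on `[t,b]` and `F x = ν [x, ∞)`. A set `{F ≤ r}` is an increasing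
union of half-lines of measure at most `r`, so it has `ν`-measure at most `r`; hence `F ^ (-p)` is
of weak type `1 / p`, and integrating the measures of its level sets gives
`∫ F ^ (-p) dν ≤ M ^ (1 - p) / (1 - p)` with `M = ν univ`.
For `d = Φ⁻¹(1 - p) Φ⁻¹(M ^ (p - 1))`, submultiplicativity gives `Φ d ≤ (1 - p) M ^ (p - 1)` and
`Φ (d Φ⁻¹(F ^ (-p))) ≤ Φ d · F ^ (-p)`, so `1 / d` is admissible in the gauge norm. Finally take
`p = 1 / 2`.
-/

open MeasureTheory Set Filter
open scoped ENNReal NNReal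

noncomputable section

/-- A Young function: even, convex, vanishing at `0`, nonnegative, tending to `∞`. -/
def IsYoung (Φ : ℝ → ℝ) : Prop :=
  ConvexOn ℝ Set.univ Φ ∧ (∀ t, Φ (-t) = Φ t) ∧ Φ 0 = 0 ∧ (∀ t, 0 ≤ Φ t) ∧
    Filter.Tendsto Φ Filter.atTop Filter.atTop

/-- A weight on `[a,b]`: nonnegative, measurable, positive a.e. on `[a,b]`. -/
def IsWeight (w : ℝ → ℝ) (a b : ℝ) : Prop :=
  Measurable w ∧ (∀ x, 0 ≤ w x) ∧
    ∀ᵐ x ∂(MeasureTheory.volume.restrict (Set.Icc a b)), 0 < w x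

/-- `Φ` is submultiplicative on `[0,∞)`. -/
def Submult (Φ : ℝ → ℝ) : Prop :=
  ∀ s t : ℝ, 0 ≤ s → 0 ≤ t → Φ (s * t) ≤ Φ s * Φ t

/-- `Φinv` is the inverse of `Φ` restricted to `[0,∞)`. -/
def IsYoungInv (Φ Φinv : ℝ → ℝ) : Prop :=
  (∀ t, 0 ≤ t → 0 ≤ Φinv t) ∧ (∀ t, 0 ≤ t → Φ (Φinv t) = t) ∧
    (∀ t, 0 ≤ t → Φinv (Φ t) = t)

/-- `μ[x,y] := ∫ₓ^y μ(t) dt`, as an extended nonnegative real. -/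
def wInt (μ : ℝ → ℝ) (x y : ℝ) : ℝ≥0∞ :=
  ∫⁻ t in Set.Icc x y, ENNReal.ofReal (μ t)

/-- The Luxemburg (gauge) norm of `f` on `[a,b]` w.r.t. the Young function `Φ`
and the weight `μ`: `inf {k > 0 : ∫ₐ^b Φ(f/k) μ ≤ 1}` (`∞` if no such `k`). -/
def luxNorm (Φ μ : ℝ → ℝ) (a b : ℝ) (f : ℝ → ℝ) : ℝ≥0∞ :=
  sInf {k : ℝ≥0∞ | ∃ c : ℝ, 0 < c ∧ k = ENNReal.ofReal c ∧
    (∫⁻ x in Set.Icc a b, ENNReal.ofReal (Φ (f x / c) * μ x)) ≤ 1}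

/-- `f` is Lipschitz on `[a,b]` and `f'` is a.e. its derivative on `(a,b)`. -/
def LipschitzWithDeriv (f f' : ℝ → ℝ) (a b : ℝ) : Prop :=
  (∃ K, LipschitzOnWith K f (Set.Icc a b)) ∧
    ∀ᵐ x ∂(MeasureTheory.volume.restrict (Set.Ioo a b)), HasDerivAt f (f' x) x

/-- The weighted `L^p` norm `(∫ₐ^b |g|^p w)^{1/p}`, as an extended nonnegative real. -/
def lpNorm (w : ℝ → ℝ) (p a b : ℝ) (g : ℝ → ℝ) : ℝ≥0∞ :=
  (∫⁻ t in Set.Icc a b, ENNReal.ofReal (|g t| ^ p * w t)) ^ (1 / p)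

/-- The Luxemburg (gauge) norm on a general measure space. -/
def luxNormGen {Ω : Type*} [MeasurableSpace Ω] (Φ : ℝ → ℝ) (μ : Measure Ω)
    (f : Ω → ℝ) : ℝ≥0∞ :=
  sInf {k : ℝ≥0∞ | ∃ c : ℝ, 0 < c ∧ k = ENNReal.ofReal c ∧
    (∫⁻ x, ENNReal.ofReal (Φ (f x / c)) ∂μ) ≤ 1}

/-- The Luxemburg (gauge) norm for an extended-real-valued Young function. -/
def luxNormE {Ω : Type*} [MeasurableSpace Ω] (Ψ : ℝ → ℝ≥0∞) (μ : Measure Ω)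
    (f : Ω → ℝ) : ℝ≥0∞ :=
  sInf {k : ℝ≥0∞ | ∃ c : ℝ, 0 < c ∧ k = ENNReal.ofReal c ∧
    (∫⁻ x, Ψ (f x / c) ∂μ) ≤ 1}

section Calibration

variable {Φ Φinv : ℝ → ℝ}

lemma Submult.map_zero (hsub : Submult Φ) (hinv : IsYoungInv Φ Φinv) : Φ 0 = 0 := by
  obtain ⟨hinv_nonneg, hΦ_inv, -⟩ := hinv
  have hle : Φ 0 ≤ Φ 0 * 0 := by
    simpa [hΦ_inv] using hsub 0 (Φinv 0) le_rfl (hinv_nonneg 0 le_rfl)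
  have hle_two : Φ 0 ≤ Φ 0 * 2 := by
    simpa [hΦ_inv] using hsub 0 (Φinv 2) le_rfl (hinv_nonneg 2 zero_le_two)
  linarith

lemma IsYoungInv.map_zero (hinv : IsYoungInv Φ Φinv) (hΦ : Φ 0 = 0) : Φinv 0 = 0 := by
  simpa [hΦ] using hinv.2.2 0 le_rfl

lemma IsYoungInv.pos (hinv : IsYoungInv Φ Φinv) (hΦ : Φ 0 = 0) {s : ℝ} (hs : 0 < s) :
    0 < Φinv s := by
  refine (hinv.1 s hs.le).lt_of_ne fun h ↦ hs.ne ?_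
  rw [← hinv.2.1 s hs.le, ← h, hΦ]

lemma Submult.map_inv_mul_le (hsub : Submult Φ) (hinv : IsYoungInv Φ Φinv) {s d : ℝ}
    (hs : 0 ≤ s) (hd : 0 ≤ d) : Φ (Φinv s * d) ≤ s * Φ d := by
  simpa only [hinv.2.1 s hs] using hsub (Φinv s) d (hinv.1 s hs) hd

end Calibration

section LuxNormGen

variable {Ω : Type*} [MeasurableSpace Ω] {Φ Φinv : ℝ → ℝ} {ν : Measure Ω}

lemma luxNormGen_congr_ae {f g : Ω → ℝ} (hfg : f =ᵐ[ν] g) :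
    luxNormGen Φ ν f = luxNormGen Φ ν g := by
  have hmodular (c : ℝ) : ∫⁻ x, ENNReal.ofReal (Φ (f x / c)) ∂ν =
      ∫⁻ x, ENNReal.ofReal (Φ (g x / c)) ∂ν :=
    lintegral_congr_ae <| hfg.mono fun x hx ↦ by simp only [hx]
  simp only [luxNormGen, hmodular]

lemma luxNormGen_inv_comp_le (hsub : Submult Φ) (hinv : IsYoungInv Φ Φinv) {h : Ω → ℝ}
    (hh : ∀ x, 0 ≤ h x) {d : ℝ} (hd : 0 < d)
    (hint : ENNReal.ofReal (Φ d) * ∫⁻ x, ENNReal.ofReal (h x) ∂ν ≤ 1) :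
    luxNormGen Φ ν (fun x ↦ Φinv (h x)) ≤ (ENNReal.ofReal d)⁻¹ := by
  rw [← ENNReal.ofReal_inv_of_pos hd]
  refine sInf_le ⟨d⁻¹, inv_pos.2 hd, rfl, ?_⟩
  calc ∫⁻ x, ENNReal.ofReal (Φ (Φinv (h x) / d⁻¹)) ∂ν
      ≤ ∫⁻ x, ENNReal.ofReal (Φ d) * ENNReal.ofReal (h x) ∂ν := by
        refine lintegral_mono fun x ↦ ?_
        rw [div_inv_eq_mul, ← ENNReal.ofReal_mul' (hh x), mul_comm (Φ d)]
        exact ENNReal.ofReal_le_ofReal (hsub.map_inv_mul_le hinv (hh x) hd.le)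
    _ = ENNReal.ofReal (Φ d) * ∫⁻ x, ENNReal.ofReal (h x) ∂ν :=
        lintegral_const_mul' _ _ ENNReal.ofReal_ne_top
    _ ≤ 1 := hint

end LuxNormGen

lemma lintegral_Ioi_rpow_of_lt {r c : ℝ} (hr : r < -1) (hc : 0 < c) :
    ∫⁻ s in Ioi c, ENNReal.ofReal (s ^ r) = ENNReal.ofReal (-c ^ (r + 1) / (r + 1)) := by
  have hnonneg : ∀ᵐ s ∂volume.restrict (Ioi c), 0 ≤ s ^ r :=
    ae_restrict_of_forall_mem measurableSet_Ioi fun s hs ↦ Real.rpow_nonneg (hc.trans hs).le r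
  rw [← ofReal_integral_eq_lintegral_ofReal (integrableOn_Ioi_rpow_of_lt hr hc) hnonneg,
    integral_Ioi_rpow_of_lt hr hc]

lemma lintegral_le_of_measure_le_rpow {Ω : Type*} [MeasurableSpace Ω] {ν : Measure Ω}
    {f : Ω → ℝ} (hf : 0 ≤ᵐ[ν] f) (hfm : AEMeasurable f ν) {q c : ℝ} (hq : 1 < q) (hc : 0 < c)
    (hweak : ∀ s, 0 < s → ν {x | s ≤ f x} ≤ ENNReal.ofReal (s ^ (-q))) :
    ∫⁻ x, ENNReal.ofReal (f x) ∂ν ≤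
      ENNReal.ofReal c * ν univ + ENNReal.ofReal (c ^ (1 - q) / (q - 1)) := by
  have hlow : ∫⁻ s in Ioc 0 c, ν {x | s ≤ f x} ≤ ENNReal.ofReal c * ν univ :=
    calc ∫⁻ s in Ioc 0 c, ν {x | s ≤ f x}
        ≤ ∫⁻ _ in Ioc 0 c, ν univ := lintegral_mono fun _ ↦ measure_mono (subset_univ _)
      _ = ENNReal.ofReal c * ν univ := by
          rw [setLIntegral_const, Real.volume_Ioc, sub_zero, mul_comm]
  have htail : ∫⁻ s in Ioi c, ν {x | s ≤ f x} ≤ ENNReal.ofReal (c ^ (1 - q) / (q - 1)) :=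
    calc ∫⁻ s in Ioi c, ν {x | s ≤ f x}
        ≤ ∫⁻ s in Ioi c, ENNReal.ofReal (s ^ (-q)) :=
          setLIntegral_mono' measurableSet_Ioi fun s hs ↦ hweak s (hc.trans hs)
      _ = ENNReal.ofReal (c ^ (1 - q) / (q - 1)) := by
          rw [lintegral_Ioi_rpow_of_lt (neg_lt_neg hq) hc, neg_div, ← div_neg]
          ring_nf
  rw [lintegral_eq_lintegral_meas_le ν hf hfm, ← Ioc_union_Ioi_eq_Ioi hc.le]
  exact (lintegral_union_le _ _ _).trans (add_le_add hlow htail)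

section MeasureIci

variable {α : Type*} [LinearOrder α] [TopologicalSpace α] [OrderTopology α]
  [MeasurableSpace α]

lemma measurable_measureReal_Ici [BorelSpace α] (ν : Measure α) :
    Measurable fun x ↦ ν.real (Ici x) :=
  have hanti : Antitone fun x ↦ ν (Ici x) := fun _ _ hxy ↦ measure_mono (Ici_subset_Ici.2 hxy)
  hanti.measurable.ennreal_toReal

variable [SecondCountableTopology α]

lemma measure_setOf_measure_Ici_le (ν : Measure α) (r : ℝ≥0∞) :
    ν {x | ν (Ici x) ≤ r} ≤ r := by
  set S := {x | ν (Ici x) ≤ r}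
  by_cases hmin : ∃ m, IsLeast S m
  · obtain ⟨m, hmS, hm⟩ := hmin
    exact (measure_mono fun _ hx ↦ hm hx).trans hmS
  have hcover : S ⊆ ⋃ x ∈ S, Ioi x := fun y hy ↦ by
    obtain ⟨x, hxS, hxy⟩ : ∃ x ∈ S, x < y := by
      by_contra! h
      exact hmin ⟨y, hy, h⟩
    exact mem_biUnion hxS hxy
  obtain ⟨T, hTS, hT, hTcover⟩ :=
    TopologicalSpace.isOpen_biUnion_countable S Ioi fun _ _ ↦ isOpen_Ioi
  have hdir : DirectedOn (Function.onFun (· ⊆ ·) Ioi) T := fun x hx y hy ↦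
    (le_total x y).elim (fun h ↦ ⟨x, hx, subset_rfl, Ioi_subset_Ioi h⟩)
      fun h ↦ ⟨y, hy, Ioi_subset_Ioi h, subset_rfl⟩
  calc ν S ≤ ν (⋃ x ∈ T, Ioi x) := measure_mono (hTcover ▸ hcover)
    _ = ⨆ x ∈ T, ν (Ioi x) := measure_biUnion_eq_iSup hT hdir
    _ ≤ r := iSup₂_le fun x hx ↦ (measure_mono Ioi_subset_Ici_self).trans (hTS hx)

lemma measure_setOf_le_rpow_measureReal_Ici_le (ν : Measure α) {p s : ℝ} (hp : 0 < p)
    (hs : 0 < s) : ν {x | s ≤ ν.real (Ici x) ^ (-p)} ≤ ENNReal.ofReal (s ^ (-p⁻¹)) := by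
  refine (measure_mono fun x hx ↦ ?_).trans (measure_setOf_measure_Ici_le ν _)
  rw [mem_ofPred_eq] at hx ⊢
  -- `0 ^ (-p) = 0` and `∞.toReal = 0`, so `s ≤ _` excludes both `ν (Ici x) = 0` and `= ∞`.
  have hne : ν.real (Ici x) ≠ 0 := fun h ↦ by
    rw [h, Real.zero_rpow (neg_ne_zero.2 hp.ne')] at hx
    exact hs.not_ge hx
  have hpos : 0 < ν.real (Ici x) := measureReal_nonneg.lt_of_ne' hne
  have hfin : ν (Ici x) ≠ ∞ := fun h ↦ hne (by simp [measureReal_def, h])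
  rw [← ofReal_measureReal hfin]
  refine ENNReal.ofReal_le_ofReal ?_
  rwa [← Real.le_rpow_inv_iff_of_neg hs hpos (by simpa using hp), inv_neg, inv_inv]

lemma lintegral_rpow_measureReal_Ici_le [BorelSpace α] (ν : Measure α) [IsFiniteMeasure ν]
    {p : ℝ} (hp₀ : 0 < p) (hp₁ : p < 1) :
    ∫⁻ x, ENNReal.ofReal (ν.real (Ici x) ^ (-p)) ∂ν ≤
      ENNReal.ofReal (ν.real univ ^ (1 - p) / (1 - p)) := by
  rcases eq_zero_or_neZero ν with rfl | _
  · simp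
  set M := ν.real univ with hM_def
  have hM : 0 < M := measureReal_univ_pos
  have hpinv : 1 < p⁻¹ := (one_lt_inv₀ hp₀).2 hp₁
  -- At height `M ^ (-p)` the bounds `ν univ` and `s ^ (-p⁻¹)` on the level sets agree.
  have hbound := lintegral_le_of_measure_le_rpow
    (Eventually.of_forall fun x ↦ Real.rpow_nonneg measureReal_nonneg (-p))
    ((measurable_measureReal_Ici ν).pow_const (-p)).aemeasurable hpinv
    (Real.rpow_pos_of_pos hM (-p)) fun s hs ↦ measure_setOf_le_rpow_measureReal_Ici_le ν hp₀ hs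
  have hlow : M ^ (-p) * M = M ^ (1 - p) := by
    rw [← Real.rpow_add_one hM.ne', neg_add_eq_sub]
  have htail : (M ^ (-p)) ^ (1 - p⁻¹) = M ^ (1 - p) := by
    rw [← Real.rpow_mul hM.le]
    congr 1
    field_simp
    ring
  refine hbound.trans_eq ?_
  rw [htail, ← ofReal_measureReal (μ := ν), ← hM_def, ← ENNReal.ofReal_mul (by positivity), hlow,
    ← ENNReal.ofReal_add (by positivity) (by have := sub_pos.2 hpinv; positivity)]
  congr 1
  have hp : 1 - p ≠ 0 := (sub_pos.2 hp₁).ne'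
  field_simp
  ring

end MeasureIci

section WeightMeasure

variable {μ : ℝ → ℝ} {a b : ℝ}

/-- The measure `μ(x) dx` on the interval `[a,b]`, through which `wInt` and `luxNorm` become
the measure of a half-line and the gauge norm `luxNormGen`. -/
def weightMeasure (μ : ℝ → ℝ) (a b : ℝ) : Measure ℝ :=
  (volume.restrict (Icc a b)).withDensity fun x ↦ ENNReal.ofReal (μ x)

lemma weightMeasure_univ : weightMeasure μ a b univ = wInt μ a b := by
  simp [weightMeasure, wInt]

lemma weightMeasure_Ici {x : ℝ} (hx : a ≤ x) : weightMeasure μ a b (Ici x) = wInt μ x b := by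
  have hIcc : Ici x ∩ Icc a b = Icc x b := by
    rw [← Ici_inter_Iic, ← inter_assoc, Ici_inter_Ici, sup_eq_left.2 hx, Ici_inter_Iic]
  rw [weightMeasure, withDensity_apply _ measurableSet_Ici,
    Measure.restrict_restrict measurableSet_Ici, hIcc, wInt]

lemma ae_weightMeasure_mem_Icc : ∀ᵐ x ∂weightMeasure μ a b, x ∈ Icc a b :=
  (withDensity_absolutelyContinuous _ _).ae_le (ae_restrict_mem measurableSet_Icc)

lemma luxNorm_eq_luxNormGen {Φ : ℝ → ℝ} (hμm : Measurable μ) (hμ : ∀ x, 0 ≤ μ x) (f : ℝ → ℝ) :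
    luxNorm Φ μ a b f = luxNormGen Φ (weightMeasure μ a b) f := by
  have hmodular (c : ℝ) : ∫⁻ x, ENNReal.ofReal (Φ (f x / c)) ∂weightMeasure μ a b =
      ∫⁻ x in Icc a b, ENNReal.ofReal (Φ (f x / c) * μ x) := by
    rw [weightMeasure, lintegral_withDensity_eq_lintegral_mul_non_measurable _ hμm.ennreal_ofReal
      (Eventually.of_forall fun _ ↦ ENNReal.ofReal_lt_top)]
    exact lintegral_congr fun x ↦ by rw [Pi.mul_apply, ENNReal.ofReal_mul' (hμ x), mul_comm]
  simp only [luxNorm, luxNormGen, hmodular]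

lemma IsWeight.mono (hμ : IsWeight μ a b) {c d : ℝ} (hac : a ≤ c) (hdb : d ≤ b) :
    IsWeight μ c d :=
  ⟨hμ.1, hμ.2.1, ae_restrict_of_ae_restrict_of_subset (Icc_subset_Icc hac hdb) hμ.2.2⟩

lemma IsWeight.neZero_weightMeasure (hμ : IsWeight μ a b) (hab : a < b) :
    NeZero (weightMeasure μ a b) := by
  refine ⟨fun h ↦ ?_⟩
  have hzero := (withDensity_eq_zero_iff hμ.1.ennreal_ofReal.aemeasurable).1 h
  have hfalse : ∀ᵐ _ ∂volume.restrict (Icc a b), False := by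
    filter_upwards [hzero, hμ.2.2] with x hx hpos
    exact (ENNReal.ofReal_pos.2 hpos).ne' hx
  rw [eventually_false_iff_eq_bot, ae_eq_bot, Measure.restrict_eq_zero, Real.volume_Icc,
    ENNReal.ofReal_eq_zero, sub_nonpos] at hfalse
  exact hfalse.not_gt hab

end WeightMeasure

theorem gauge_norm_inv_sqrt_bound_general {α : Type*} [LinearOrder α] [TopologicalSpace α]
    [OrderTopology α] [SecondCountableTopology α] [MeasurableSpace α] [BorelSpace α]
    (ν : Measure α) [NeZero ν] {Φ Φinv : ℝ → ℝ} (hsub : Submult Φ) (hinv : IsYoungInv Φ Φinv)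
    {p : ℝ} (hp₀ : 0 < p) (hp₁ : p < 1) :
    luxNormGen Φ ν (fun x ↦ Φinv (ν.real (Ici x) ^ (-p))) ≤
      (ENNReal.ofReal (Φinv (1 - p) * Φinv (ν.real univ ^ (-(1 - p)))))⁻¹ := by
  have hΦ := hsub.map_zero hinv
  have hp : 0 < 1 - p := sub_pos.2 hp₁
  rcases eq_or_ne (ν univ) ∞ with htop | hfin
  · -- The right-hand side is `0⁻¹ = ∞`, since `∞.toReal ^ (-(1 - p)) = 0`.
    have hzero : ν.real univ ^ (-(1 - p)) = 0 := by
      rw [measureReal_def, htop, ENNReal.toReal_top, Real.zero_rpow (neg_ne_zero.2 hp.ne')]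
    simp only [hzero, hinv.map_zero hΦ, mul_zero, ENNReal.ofReal_zero, ENNReal.inv_zero, le_top]
  have : IsFiniteMeasure ν := ⟨hfin.lt_top⟩
  set M := ν.real univ
  have hM : 0 < M := measureReal_univ_pos
  have hMp : 0 < M ^ (-(1 - p)) := Real.rpow_pos_of_pos hM _
  set d := Φinv (1 - p) * Φinv (M ^ (-(1 - p)))
  have hd : 0 < d := mul_pos (hinv.pos hΦ hp) (hinv.pos hΦ hMp)
  have hΦd : Φ d ≤ (1 - p) * M ^ (-(1 - p)) := by
    simpa only [hinv.2.1 _ hMp.le] using hsub.map_inv_mul_le hinv hp.le (hinv.1 _ hMp.le)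
  refine luxNormGen_inv_comp_le hsub hinv (fun x ↦ Real.rpow_nonneg measureReal_nonneg _) hd ?_
  calc ENNReal.ofReal (Φ d) * ∫⁻ x, ENNReal.ofReal (ν.real (Ici x) ^ (-p)) ∂ν
      ≤ ENNReal.ofReal ((1 - p) * M ^ (-(1 - p))) * ENNReal.ofReal (M ^ (1 - p) / (1 - p)) := by
        gcongr
        exact lintegral_rpow_measureReal_Ici_le ν hp₀ hp₁
    _ = 1 := by
        rw [← ENNReal.ofReal_mul (by positivity), Real.rpow_neg hM.le, ENNReal.ofReal_eq_one]
        field_simp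

/-- Gauge-norm bound: `‖Φ⁻¹(μ[•,b]^{-1/2})‖_{L_μ^Φ[t,b]} ≤ [Φ⁻¹(1/2) Φ⁻¹(μ[t,b]^{-1/2})]⁻¹`. -/
theorem gauge_norm_inv_sqrt_bound
    (a b : ℝ) (hab : a < b) (Φ Φinv μ : ℝ → ℝ)
    (hΦ : IsYoung Φ) (hsub : Submult Φ) (hinv : IsYoungInv Φ Φinv)
    (hμ : IsWeight μ a b) :
    ∀ t ∈ Set.Ioo a b,
      luxNorm Φ μ t b (fun x => Φinv ((wInt μ x b).toReal ^ (-(1/2) : ℝ)))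
        ≤ (ENNReal.ofReal (Φinv (1/2) * Φinv ((wInt μ t b).toReal ^ (-(1/2) : ℝ))))⁻¹ := by
  rintro t ⟨hat, htb⟩
  set ν := weightMeasure μ t b
  have : NeZero ν := (hμ.mono hat.le le_rfl).neZero_weightMeasure htb
  have htail : (fun x ↦ Φinv ((wInt μ x b).toReal ^ (-(1 / 2) : ℝ))) =ᵐ[ν]
      fun x ↦ Φinv (ν.real (Ici x) ^ (-(1 / 2) : ℝ)) := by
    filter_upwards [ae_weightMeasure_mem_Icc] with x hx
    rw [measureReal_def, weightMeasure_Ici hx.1]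
  rw [luxNorm_eq_luxNormGen hμ.1 hμ.2.1, luxNormGen_congr_ae htail, ← weightMeasure_univ]
  have hbound := gauge_norm_inv_sqrt_bound_general ν hsub hinv one_half_pos one_half_lt_one
  rwa [sub_half] at hbound
end
end

section
/- Let 0 < b < ∞, 1 < p < ∞ with conjugate exponent p' = p/(p−1), and 0 < α < (3/4)p. Let w(x) = 2e^{-1/x²}/x³ on (0,b], and let Φ(t) = |t|^p (ln|t|)^α for |t| ≥ e^{2α} and Φ(t) = |t|^p (2α)^α for |t| < e^{2α}, with inverse Φ^{-1} on [0,∞). Then sup_{0<x<b} { [Φ^{-1}( e^{1/(2x²)} )]^{-2} · (∫_x^b (∫_t^b w(s) ds)^{p'} · w(t)^{1−p'} dt)^{1/p'} } < ∞; that is, the second supremum in the constant K_{p,Φ}(w,w,w) of the sufficient condition for the (Φ,p) Orlicz–Poincaré inequality is finite (note w[0,x]^{-1/2} = e^{1/(2x²)}). -/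
open MeasureTheory Set Filter
open scoped ENNReal NNReal

noncomputable section

/-!
With `1/p + 1/q = 1`, the integrand `w[t,b]^q w(t)^{1-q}` is at most a constant times
`t^{3q} e^{(q-1)/t²} / t³`, because `w[t,b] ≤ 1`. Writing `a = (q-1)/2` and splitting
`e^{(q-1)/t²} = e^{a/t²} e^{a/t²}`, one factor absorbs `t^{3q}`, since `t ↦ t^{3q} e^{a/t²}` is
decreasing up to a constant on `(0,b]`, and `e^{a/t²} / t³` has an explicit antiderivative. So the
`q`-th root of the integral is `O(x³ e^{1/(p x²)})`. Conversely `Φ(s) = y` forces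
`log s = O(log y)`, hence `Φ⁻¹(e^{1/(2x²)})^{-2} = O(x^{-4α/p} e^{-1/(p x²)})`. The product is
`O(x^{3-4α/p})`, which stays bounded exactly when `α ≤ 3p/4`.
-/

section ExpDivSq

variable {a b r t x : ℝ}

lemma hasDerivAt_exp_div_sq (a : ℝ) (ht : t ≠ 0) :
    HasDerivAt (fun u : ℝ => Real.exp (a / u ^ 2))
      (-(2 * a) * (Real.exp (a / t ^ 2) / t ^ 3)) t := by
  have hquot : HasDerivAt (fun u : ℝ => a / u ^ 2) (-(2 * a) / t ^ 3) t := by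
    refine (((hasDerivAt_pow 2 t).inv (pow_ne_zero 2 ht)).const_mul a).congr_deriv ?_
    simp only [Nat.cast_ofNat, Nat.add_one_sub_one, pow_one]
    field_simp
  exact hquot.exp.congr_deriv (by ring)

lemma lintegral_exp_div_sq_div_cube (ha : a ≠ 0) (hx : 0 < x) (hxb : x ≤ b) :
    ∫⁻ t in Icc x b, ENNReal.ofReal (Real.exp (a / t ^ 2) / t ^ 3) =
      ENNReal.ofReal ((Real.exp (a / x ^ 2) - Real.exp (a / b ^ 2)) / (2 * a)) := by
  have hpos : ∀ t ∈ Icc x b, 0 < t := fun t ht => hx.trans_le ht.1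
  have hcont : ContinuousOn (fun t : ℝ => Real.exp (a / t ^ 2) / t ^ 3) (Icc x b) := fun t ht => by
    have := (hpos t ht).ne'
    exact ContinuousAt.continuousWithinAt (by fun_prop (disch := positivity))
  have hderiv : ∀ t ∈ uIcc x b, HasDerivAt (fun u : ℝ => -(Real.exp (a / u ^ 2) / (2 * a)))
      (Real.exp (a / t ^ 2) / t ^ 3) t := fun t ht => by
    have ht0 := hpos t (uIcc_of_le hxb ▸ ht)
    refine ((hasDerivAt_exp_div_sq a ht0.ne').div_const (2 * a)).neg.congr_deriv ?_
    field_simp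
  have hnonneg : 0 ≤ᵐ[volume.restrict (Icc x b)] fun t => Real.exp (a / t ^ 2) / t ^ 3 :=
    ae_restrict_of_forall_mem measurableSet_Icc fun t ht => by
      have := hpos t ht
      simp only [Pi.zero_apply]
      positivity
  rw [← ofReal_integral_eq_lintegral_ofReal hcont.integrableOn_Icc hnonneg,
    integral_Icc_eq_integral_Ioc, ← intervalIntegral.integral_of_le hxb,
    intervalIntegral.integral_eq_sub_of_hasDerivAt hderiv
      (hcont.intervalIntegrable_of_Icc hxb)]
  congr 1
  ring

lemma sq_mul_exp_div_sq_le (ha : 0 < a) (hx : 0 < x) (hxt : x ≤ t) (htb : t ≤ b) :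
    t ^ 2 * Real.exp (a / t ^ 2) ≤ (1 + b ^ 2 / a) * (x ^ 2 * Real.exp (a / x ^ 2)) := by
  have ht : 0 < t := hx.trans_le hxt
  set δ := a / x ^ 2 - a / t ^ 2 with hδ
  have hδ_nonneg : 0 ≤ δ := sub_nonneg.2 (by gcongr)
  have hδ_le_exp : δ ≤ Real.exp δ := by linarith [Real.add_one_le_exp δ]
  calc t ^ 2 * Real.exp (a / t ^ 2)
      = x ^ 2 * (1 + t ^ 2 / a * δ) * Real.exp (a / t ^ 2) := by rw [hδ]; field_simp; ring
    _ ≤ x ^ 2 * (Real.exp δ + b ^ 2 / a * Real.exp δ) * Real.exp (a / t ^ 2) := by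
        gcongr
        exact Real.one_le_exp hδ_nonneg
    _ = (1 + b ^ 2 / a) * (x ^ 2 * (Real.exp δ * Real.exp (a / t ^ 2))) := by ring
    _ = (1 + b ^ 2 / a) * (x ^ 2 * Real.exp (a / x ^ 2)) := by
        rw [← Real.exp_add, hδ, sub_add_cancel]

lemma exists_rpow_mul_exp_div_sq_le (b : ℝ) (hr : 0 < r) (ha : 0 < a) :
    ∃ C, 0 < C ∧ ∀ x t, 0 < x → x ≤ t → t ≤ b →
      t ^ r * Real.exp (a / t ^ 2) ≤ C * (x ^ r * Real.exp (a / x ^ 2)) := by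
  have hroot : ∀ u : ℝ, 0 < u →
      (u ^ 2 * Real.exp (2 * a / r / u ^ 2)) ^ (r / 2) = u ^ r * Real.exp (a / u ^ 2) := by
    intro u hu
    rw [Real.mul_rpow (by positivity) (by positivity), ← Real.rpow_natCast, ← Real.rpow_mul hu.le,
      ← Real.exp_mul]
    congr 2 <;> (push_cast; field_simp)
  refine ⟨(1 + b ^ 2 / (2 * a / r)) ^ (r / 2), by positivity, fun x t hx hxt htb => ?_⟩
  rw [← hroot x hx, ← hroot t (hx.trans_le hxt),
    ← Real.mul_rpow (by positivity) (by positivity)]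
  have hsq := sq_mul_exp_div_sq_le (a := 2 * a / r) (by positivity) hx hxt htb
  gcongr

end ExpDivSq

section Weight

variable {b q t x : ℝ}

/-- The weight `w(x) = 2e^{-1/x²}/x³`, which vanishes to infinite order at `0`. Only its values on
`(0,∞)` matter; the formula makes it negative on `(-∞,0)`. -/
def degenerateWeight (x : ℝ) : ℝ :=
  2 * Real.exp (-(1 / x ^ 2)) / x ^ 3

lemma wInt_degenerateWeight (hx : 0 < x) (hxb : x ≤ b) :
    wInt degenerateWeight x b =
      ENNReal.ofReal (Real.exp (-1 / b ^ 2) - Real.exp (-1 / x ^ 2)) := by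
  have hweight : ∀ t, ENNReal.ofReal (degenerateWeight t) =
      2 * ENNReal.ofReal (Real.exp (-1 / t ^ 2) / t ^ 3) := fun t => by
    rw [← ENNReal.ofReal_ofNat 2, ← ENNReal.ofReal_mul zero_le_two, degenerateWeight, neg_div,
      mul_div_assoc]
  simp only [wInt, hweight]
  rw [lintegral_const_mul _ (by fun_prop),
    lintegral_exp_div_sq_div_cube (by norm_num) hx hxb, ← ENNReal.ofReal_ofNat 2,
    ← ENNReal.ofReal_mul zero_le_two]
  congr 1
  ring

lemma toReal_wInt_degenerateWeight_le_one (hx : 0 < x) (hxb : x ≤ b) :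
    (wInt degenerateWeight x b).toReal ≤ 1 := by
  have hexp_le : Real.exp (-1 / b ^ 2) ≤ 1 :=
    Real.exp_le_one_iff.2 (div_nonpos_of_nonpos_of_nonneg (by norm_num) (by positivity))
  rw [wInt_degenerateWeight hx hxb]
  refine ENNReal.toReal_le_of_le_ofReal zero_le_one (ENNReal.ofReal_le_ofReal ?_)
  linarith [Real.exp_pos (-1 / x ^ 2)]

lemma degenerateWeight_rpow_one_sub (q : ℝ) (ht : 0 < t) :
    degenerateWeight t ^ (1 - q) =
      2 ^ (1 - q) * (t ^ (3 * q) * Real.exp ((q - 1) / 2 / t ^ 2)) *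
        (Real.exp ((q - 1) / 2 / t ^ 2) / t ^ 3) := by
  have hexp : Real.exp (-(1 / t ^ 2)) ^ (1 - q) =
      Real.exp ((q - 1) / 2 / t ^ 2) * Real.exp ((q - 1) / 2 / t ^ 2) := by
    rw [← Real.exp_mul, ← Real.exp_add]
    congr 1
    ring
  have hcube : (t ^ 3) ^ (1 - q) = t ^ 3 / t ^ (3 * q) := by
    rw [Real.rpow_sub (by positivity), Real.rpow_one, Real.rpow_mul ht.le]
    norm_cast
  rw [degenerateWeight, Real.div_rpow (by positivity) (by positivity),
    Real.mul_rpow (by positivity) (by positivity), hexp, hcube]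
  field_simp

lemma exists_wInt_rpow_mul_degenerateWeight_rpow_le (b : ℝ) (hq : 1 < q) :
    ∃ C, 0 < C ∧ ∀ x t, 0 < x → x ≤ t → t ≤ b →
      (wInt degenerateWeight t b).toReal ^ q * degenerateWeight t ^ (1 - q) ≤
        C * (x ^ (3 * q) * Real.exp ((q - 1) / 2 / x ^ 2)) *
          (Real.exp ((q - 1) / 2 / t ^ 2) / t ^ 3) := by
  obtain ⟨C, hC, hle⟩ := exists_rpow_mul_exp_div_sq_le (r := 3 * q) (a := (q - 1) / 2) b
    (by linarith) (by linarith)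
  refine ⟨2 ^ (1 - q) * C, by positivity, fun x t hx hxt htb => ?_⟩
  have ht : 0 < t := hx.trans_le hxt
  have hwInt : (wInt degenerateWeight t b).toReal ^ q ≤ 1 :=
    Real.rpow_le_one ENNReal.toReal_nonneg (toReal_wInt_degenerateWeight_le_one ht htb)
      (by linarith)
  rw [degenerateWeight_rpow_one_sub q ht, mul_assoc (2 ^ (1 - q)) C]
  refine (mul_le_of_le_one_left (by positivity) hwInt).trans ?_
  gcongr ?_ * ?_ * ?_
  exact hle x t hx hxt htb

lemma exists_lintegral_wInt_rpow_mul_degenerateWeight_rpow_le (b : ℝ) (hq : 1 < q) :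
    ∃ K, 0 < K ∧ ∀ x ∈ Ioo 0 b,
      ∫⁻ t in Icc x b, ENNReal.ofReal
          ((wInt degenerateWeight t b).toReal ^ q * degenerateWeight t ^ (1 - q)) ≤
        ENNReal.ofReal (K * (x ^ (3 * q) * Real.exp ((q - 1) / x ^ 2))) := by
  obtain ⟨C, hC, hle⟩ := exists_wInt_rpow_mul_degenerateWeight_rpow_le b hq
  have : 0 < q - 1 := sub_pos.2 hq
  refine ⟨C / (q - 1), by positivity, fun x ⟨hx, hxb⟩ => ?_⟩
  set E : ℝ → ℝ := fun t => Real.exp ((q - 1) / 2 / t ^ 2) with hE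
  calc _ ≤ ∫⁻ t in Icc x b, ENNReal.ofReal (C * (x ^ (3 * q) * E x)) *
          ENNReal.ofReal (E t / t ^ 3) := by
        refine setLIntegral_mono (by fun_prop) fun t ht => ?_
        rw [← ENNReal.ofReal_mul (by positivity)]
        exact ENNReal.ofReal_le_ofReal (hle x t hx ht.1 ht.2)
    _ = ENNReal.ofReal (C * (x ^ (3 * q) * E x)) *
          ENNReal.ofReal ((E x - E b) / (2 * ((q - 1) / 2))) := by
        rw [lintegral_const_mul _ (by fun_prop),
          lintegral_exp_div_sq_div_cube (by positivity) hx hxb.le]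
    _ ≤ ENNReal.ofReal (C * (x ^ (3 * q) * E x)) * ENNReal.ofReal (E x / (q - 1)) := by
        rw [mul_div_cancel₀ (q - 1) two_ne_zero]
        gcongr
        exact sub_le_self _ (Real.exp_pos _).le
    _ = ENNReal.ofReal (C / (q - 1) * (x ^ (3 * q) * Real.exp ((q - 1) / x ^ 2))) := by
        have hEE : Real.exp ((q - 1) / x ^ 2) = E x * E x := by
          rw [hE, ← Real.exp_add]
          congr 1
          ring
        rw [← ENNReal.ofReal_mul (by positivity), hEE]
        congr 1
        ring

lemma exists_lintegral_rpow_inv_degenerateWeight_le {p : ℝ} (b : ℝ) (hpq : p.HolderConjugate q) :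
    ∃ K, 0 < K ∧ ∀ x ∈ Ioo 0 b,
      (∫⁻ t in Icc x b, ENNReal.ofReal
          ((wInt degenerateWeight t b).toReal ^ q * degenerateWeight t ^ (1 - q))) ^ (1 / q) ≤
        ENNReal.ofReal (K * (x ^ (3 : ℝ) * Real.exp (1 / (p * x ^ 2)))) := by
  obtain ⟨K, hK, hle⟩ := exists_lintegral_wInt_rpow_mul_degenerateWeight_rpow_le b hpq.symm.lt
  have hp := hpq.pos
  have hq := hpq.symm.pos
  refine ⟨K ^ (1 / q), by positivity, fun x hx => ?_⟩
  have hx0 : 0 < x := hx.1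
  refine (ENNReal.rpow_le_rpow (hle x hx) (by positivity)).trans_eq ?_
  have hexponent : (q - 1) / x ^ 2 * (1 / q) = 1 / (p * x ^ 2) := by
    rw [← hpq.symm.div_conj_eq_sub_one]
    field_simp
  rw [ENNReal.ofReal_rpow_of_pos (by positivity), Real.mul_rpow (by positivity) (by positivity),
    Real.mul_rpow (by positivity) (by positivity), ← Real.rpow_mul hx0.le,
    mul_assoc 3, mul_one_div_cancel hq.ne', mul_one, ← Real.exp_mul, hexponent]

end Weight

section BumpedPower

variable {p s α : ℝ} {Φinv : ℝ → ℝ}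

/-- The Young function `Φ(t) = |t|^p (log |t|)^α`, with the logarithm frozen at the value `2α` it
takes at `|t| = e^{2α}` for smaller `|t|`. -/
def bumpedPower (p α t : ℝ) : ℝ :=
  if Real.exp (2 * α) ≤ |t| then |t| ^ p * Real.log |t| ^ α else |t| ^ p * (2 * α) ^ α

lemma bumpedPower_of_pos (p α : ℝ) (hs : 0 < s) :
    bumpedPower p α s = s ^ p * max (Real.log s) (2 * α) ^ α := by
  rw [bumpedPower, abs_of_pos hs]
  split_ifs with h
  · rw [max_eq_left ((Real.le_log_iff_exp_le hs).2 h)]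
  · rw [max_eq_right ((Real.log_lt_iff_lt_exp hs).2 (not_le.1 h)).le]

lemma log_le_log_bumpedPower_div (hp : 0 < p) (hα : 0 ≤ α) (hs : 0 < s) :
    Real.log s ≤ (Real.log (bumpedPower p α s) - Real.log ((2 * α) ^ α)) / p := by
  have hc : 0 < (2 * α) ^ α := by
    rcases hα.eq_or_lt with rfl | hα
    · simp
    · positivity
  have hle : s ^ p * (2 * α) ^ α ≤ bumpedPower p α s := by
    rw [bumpedPower_of_pos p α hs]
    gcongr
    exact le_max_right _ _
  have hlog := Real.log_le_log (by positivity) hle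
  rw [Real.log_mul (by positivity) hc.ne', Real.log_rpow hs] at hlog
  rw [le_div_iff₀ hp]
  linarith

lemma exists_bumpedPower_le_rpow_mul_log_rpow (hp : 0 < p) (hα : 0 ≤ α) :
    ∃ A, 0 ≤ A ∧ ∀ s, 0 < s → 1 ≤ bumpedPower p α s →
      bumpedPower p α s ≤ s ^ p * (A + Real.log (bumpedPower p α s) / p) ^ α := by
  set c := Real.log ((2 * α) ^ α)
  refine ⟨2 * α + |c| / p, by positivity, fun s hs hone => ?_⟩
  have hlog := log_le_log_bumpedPower_div hp hα hs
  have hlog_nonneg : 0 ≤ Real.log (bumpedPower p α s) / p :=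
    div_nonneg (Real.log_nonneg hone) hp.le
  have hc : -(c / p) ≤ |c| / p := by
    rw [← neg_div]
    gcongr
    exact neg_le_abs c
  have habs : 0 ≤ |c| / p := by positivity
  rw [sub_div] at hlog
  calc bumpedPower p α s = s ^ p * max (Real.log s) (2 * α) ^ α := bumpedPower_of_pos p α hs
    _ ≤ _ := by
      gcongr
      exact max_le (by linarith) (by linarith)

lemma IsYoungInv.pos_of_bumpedPower (hp : 0 < p) (hinv : IsYoungInv (bumpedPower p α) Φinv)
    {y : ℝ} (hy : 0 < y) : 0 < Φinv y := by
  refine (hinv.1 y hy.le).lt_of_ne fun hzero => hy.ne ?_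
  rw [← hinv.2.1 y hy.le, ← hzero]
  simp [bumpedPower, Real.zero_rpow hp.ne']

lemma exists_exp_le_youngInv_rpow_mul (b : ℝ) (hp : 0 < p) (hα : 0 ≤ α)
    (hinv : IsYoungInv (bumpedPower p α) Φinv) :
    ∃ D, 0 < D ∧ ∀ x ∈ Ioo 0 b,
      Real.exp (1 / (2 * x ^ 2)) ≤
        Φinv (Real.exp (1 / (2 * x ^ 2))) ^ p * (D * x ^ (-2 : ℝ)) ^ α := by
  obtain ⟨A, hA, hle⟩ := exists_bumpedPower_le_rpow_mul_log_rpow hp hα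
  refine ⟨A * b ^ 2 + 1 / (2 * p), by positivity, fun x ⟨hx, hxb⟩ => ?_⟩
  set y := Real.exp (1 / (2 * x ^ 2)) with hy
  have hy0 : 0 < y := Real.exp_pos _
  have hΦ : bumpedPower p α (Φinv y) = y := hinv.2.1 y hy0.le
  have hs : 0 < Φinv y := hinv.pos_of_bumpedPower hp hy0
  have hlog_le : A + Real.log y / p ≤ (A * b ^ 2 + 1 / (2 * p)) * x ^ (-2 : ℝ) := by
    have hone : 1 ≤ b ^ 2 / x ^ 2 := (one_le_div (by positivity)).2 (by gcongr)
    calc A + Real.log y / p = A * 1 + 1 / (2 * x ^ 2) / p := by rw [hy, Real.log_exp, mul_one]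
      _ ≤ A * (b ^ 2 / x ^ 2) + 1 / (2 * x ^ 2) / p := by gcongr
      _ = (A * b ^ 2 + 1 / (2 * p)) * x ^ (-2 : ℝ) := by
        rw [Real.rpow_neg hx.le, Real.rpow_two]
        field_simp
  have hone : 1 ≤ y := Real.one_le_exp (by positivity)
  have hlog_nonneg : 0 ≤ Real.log y / p := div_nonneg (Real.log_nonneg hone) hp.le
  have hle_y := hle (Φinv y) hs (hΦ.symm ▸ hone)
  rw [hΦ] at hle_y
  exact hle_y.trans (by gcongr)

lemma exists_exp_le_youngInv_sq_mul (b : ℝ) (hp : 0 < p) (hα : 0 ≤ α)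
    (hinv : IsYoungInv (bumpedPower p α) Φinv) :
    ∃ D, 0 < D ∧ ∀ x ∈ Ioo 0 b,
      Real.exp (1 / (p * x ^ 2)) ≤
        Φinv (Real.exp (1 / (2 * x ^ 2))) ^ 2 * (D * x ^ (-(4 * α / p))) := by
  obtain ⟨D, hD, hle⟩ := exists_exp_le_youngInv_rpow_mul b hp hα hinv
  refine ⟨D ^ (α * (2 / p)), by positivity, fun x hx => ?_⟩
  have hx0 : 0 < x := hx.1
  set s := Φinv (Real.exp (1 / (2 * x ^ 2)))
  have hs : 0 ≤ s := hinv.1 _ (Real.exp_pos _).le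
  calc Real.exp (1 / (p * x ^ 2)) = Real.exp (1 / (2 * x ^ 2)) ^ (2 / p) := by
        rw [← Real.exp_mul]
        congr 1
        field_simp
    _ ≤ (s ^ p * (D * x ^ (-2 : ℝ)) ^ α) ^ (2 / p) := by
        gcongr
        exact hle x hx
    _ = s ^ 2 * (D ^ (α * (2 / p)) * x ^ (-(4 * α / p))) := by
        rw [Real.mul_rpow (by positivity) (by positivity), ← Real.rpow_mul hs,
          ← Real.rpow_mul (by positivity), Real.mul_rpow hD.le (by positivity),
          ← Real.rpow_mul hx0.le, mul_div_cancel₀ 2 hp.ne', Real.rpow_two]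
        congr 3
        ring

end BumpedPower

theorem degenerate_weight_KpPhi_finite_general
    (b p pc α : ℝ) (hp : 1 < p) (hpc : pc = p / (p - 1))
    (hα : 0 ≤ α) (hαp : α ≤ 3 / 4 * p)
    (w Φ Φinv : ℝ → ℝ)
    (hw : w = fun x => 2 * Real.exp (-(1 / x ^ 2)) / x ^ 3)
    (hΦdef : ∀ t, Φ t = if Real.exp (2 * α) ≤ |t|
      then |t| ^ p * (Real.log |t|) ^ α else |t| ^ p * (2 * α) ^ α)
    (hinv : IsYoungInv Φ Φinv) :
    (⨆ x ∈ Ioo 0 b,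
        ((ENNReal.ofReal (Φinv (Real.exp (1 / (2 * x ^ 2))))) ^ 2)⁻¹ *
          (∫⁻ t in Icc x b,
            ENNReal.ofReal ((wInt w t b).toReal ^ pc * w t ^ (1 - pc))) ^ (1 / pc)) < ⊤ := by
  obtain rfl : w = degenerateWeight := hw
  obtain rfl : Φ = bumpedPower p α := funext hΦdef
  have hp0 : 0 < p := by linarith
  obtain ⟨K, hK, hintegral⟩ := exists_lintegral_rpow_inv_degenerateWeight_le b
    ((Real.holderConjugate_iff_eq_conjExponent hp).2 hpc)
  obtain ⟨D, hD, hexp⟩ := exists_exp_le_youngInv_sq_mul b hp0 hα hinv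
  have hexponent : 0 ≤ 3 - 4 * α / p := sub_nonneg.2 ((div_le_iff₀ hp0).2 (by linarith))
  refine (iSup₂_le fun x hx => ?_).trans_lt
    (ENNReal.ofReal_lt_top (r := K * D * b ^ (3 - 4 * α / p)))
  have hx0 : 0 < x := hx.1
  set s := Φinv (Real.exp (1 / (2 * x ^ 2)))
  have hs : 0 < s := hinv.pos_of_bumpedPower hp0 (Real.exp_pos _)
  rw [ENNReal.inv_mul_le_iff (by positivity) (by finiteness), ← ENNReal.ofReal_pow hs.le,
    ← ENNReal.ofReal_mul (by positivity)]
  refine (hintegral x hx).trans (ENNReal.ofReal_le_ofReal ?_)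
  calc K * (x ^ (3 : ℝ) * Real.exp (1 / (p * x ^ 2)))
      ≤ K * (x ^ (3 : ℝ) * (s ^ 2 * (D * x ^ (-(4 * α / p))))) := by gcongr; exact hexp x hx
    _ = s ^ 2 * (K * D * x ^ (3 - 4 * α / p)) := by
        rw [sub_eq_add_neg, Real.rpow_add hx0]
        ring
    _ ≤ s ^ 2 * (K * D * b ^ (3 - 4 * α / p)) := by gcongr; exact hx.2.le

/-- For the weight `w(x) = 2e^{-1/x²}/x³` on `(0,b]` and the bumped power Young function
`Φ(t) = |t|^p (ln|t|)^α` (for `|t| ≥ e^{2α}`; `= |t|^p (2α)^α` otherwise) with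
`0 < α < (3/4)p`, the second supremum in `K_{p,Φ}(w,w,w)` is finite
(note `w[0,x]^{-1/2} = e^{1/(2x²)}`). -/
theorem degenerate_weight_KpPhi_finite
    (b p pc α : ℝ) (hb : 0 < b) (hp : 1 < p) (hpc : pc = p / (p - 1))
    (hα : 0 < α) (hαp : α < 3/4 * p)
    (w Φ Φinv : ℝ → ℝ)
    (hw : w = fun x => 2 * Real.exp (-(1 / x ^ 2)) / x ^ 3)
    (hΦdef : ∀ t, Φ t = if Real.exp (2*α) ≤ |t|
      then |t| ^ p * (Real.log |t|) ^ α else |t| ^ p * (2*α) ^ α)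
    (hinv : IsYoungInv Φ Φinv) :
    (⨆ x ∈ Set.Ioo (0:ℝ) b,
        ((ENNReal.ofReal (Φinv (Real.exp (1 / (2 * x ^ 2))))) ^ 2)⁻¹ *
          (∫⁻ t in Set.Icc x b,
            ENNReal.ofReal ((wInt w t b).toReal ^ pc * w t ^ (1 - pc))) ^ (1 / pc)) < ⊤ := by
  exact degenerate_weight_KpPhi_finite_general b p pc α hp hpc hα.le hαp.le w Φ Φinv
    hw hΦdef hinv
end
end
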